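/- A nonnegative semi-convex function u on [0,1] satisfies the differential inequality u'' ≤ −(K/N)θ² u in the distributional sense if and only if it satisfies the integrated concavity inequality u(t) ≥ σ^{(1−t)}_{K/N}(θ) u(0) + σ^{(t)}_{K/N}(θ) u(1) along with the corresponding inequality on every subinterval, where σ^{(t)}_κ(θ) is the distortion coefficient defined via sin/sinh. -/

import Mathlib

open MeasureTheory Classical

/-- The comparison function `𝔰_κ`: `sin(√κ θ)/√κ` for `κ > 0`, `θ` for `κ = 0`, and
`sinh(√−κ θ)/√−κ` for `κ < 0`. -/
noncomputable def sK (κ θ : ℝ) : ℝ :=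
  if 0 < κ then Real.sin (Real.sqrt κ * θ) / Real.sqrt κ
  else if κ = 0 then θ
  else Real.sinh (Real.sqrt (-κ) * θ) / Real.sqrt (-κ)

/-- The distortion coefficient `σ^{(t)}_κ(θ) = 𝔰_κ(tθ)/𝔰_κ(θ)` (equal to `t` when `κθ² = 0`). -/
noncomputable def sigmaR (κ t θ : ℝ) : ℝ :=
  if κ * θ ^ 2 = 0 then t else sK κ (t * θ) / sK κ θ

open Filter Topology Convolution

noncomputable def cK (κ θ : ℝ) : ℝ :=
  if 0 < κ then Real.cos (Real.sqrt κ * θ)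
  else if κ = 0 then 1
  else Real.cosh (Real.sqrt (-κ) * θ)

lemma sK_hasDeriv (c x : ℝ) : HasDerivAt (sK c) (cK c x) x := by
  unfold sK cK
  by_cases h : 0 < c
  · have hs : 0 < Real.sqrt c := Real.sqrt_pos.2 h
    simp only [h, if_true]
    have := ((((hasDerivAt_id' x).const_mul (Real.sqrt c))).sin).div_const (Real.sqrt c)
    refine HasDerivAt.congr_deriv (this) ?_
    field_simp
  · by_cases h0 : c = 0
    · simp only [h0, lt_irrefl, if_true, if_false]
      exact hasDerivAt_id x
    · have hc : 0 < -c := by have := lt_of_le_of_ne (not_lt.1 h) h0; linarith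
      have hs : 0 < Real.sqrt (-c) := Real.sqrt_pos.2 hc
      simp only [h, h0, if_false]
      have := ((((hasDerivAt_id' x).const_mul (Real.sqrt (-c)))).sinh).div_const (Real.sqrt (-c))
      refine HasDerivAt.congr_deriv (this) ?_
      field_simp

lemma cK_hasDeriv (c x : ℝ) : HasDerivAt (cK c) (-c * sK c x) x := by
  unfold sK cK
  by_cases h : 0 < c
  · have hs : 0 < Real.sqrt c := Real.sqrt_pos.2 h
    have hq : Real.sqrt c * Real.sqrt c = c := Real.mul_self_sqrt h.le
    simp only [h, if_true]
    have := ((((hasDerivAt_id' x).const_mul (Real.sqrt c))).cos)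
    refine HasDerivAt.congr_deriv (this) ?_
    field_simp
    linear_combination (-Real.sin (Real.sqrt c * x)) * hq
  · by_cases h0 : c = 0
    · simp only [h0, lt_irrefl, if_true, if_false]
      simpa using hasDerivAt_const x (1:ℝ)
    · have hc : 0 < -c := by have := lt_of_le_of_ne (not_lt.1 h) h0; linarith
      have hs : 0 < Real.sqrt (-c) := Real.sqrt_pos.2 hc
      have hq : Real.sqrt (-c) * Real.sqrt (-c) = -c := Real.mul_self_sqrt hc.le
      simp only [h, h0, if_false]
      have := ((((hasDerivAt_id' x).const_mul (Real.sqrt (-c)))).cosh)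
      refine HasDerivAt.congr_deriv (this) ?_
      field_simp
      linear_combination (Real.sinh (Real.sqrt (-c) * x)) * hq

lemma sK_add (c x y : ℝ) : sK c (x + y) = sK c x * cK c y + cK c x * sK c y := by
  unfold sK cK
  split_ifs
  · rw [mul_add, Real.sin_add]; ring
  · ring
  · rw [mul_add, Real.sinh_add]; ring

lemma sK_zero (c : ℝ) : sK c 0 = 0 := by
  unfold sK; split_ifs <;> simp

lemma cK_zero (c : ℝ) : cK c 0 = 1 := by
  unfold cK; split_ifs <;> simp

lemma cK_neg (c x : ℝ) : cK c (-x) = cK c x := by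
  unfold cK; split_ifs <;> simp

lemma sK_pos (c x : ℝ) (hc : c < Real.pi ^ 2) (hx : 0 < x) (hx1 : x ≤ 1) : 0 < sK c x := by
  unfold sK
  split_ifs with h h0
  · have hs : 0 < Real.sqrt c := Real.sqrt_pos.2 h
    have hp : Real.sqrt c < Real.pi := (Real.sqrt_lt' Real.pi_pos).2 hc
    refine div_pos (Real.sin_pos_of_pos_of_lt_pi (by positivity) ?_) hs
    nlinarith
  · exact hx
  · have hc : 0 < -c := by have := lt_of_le_of_ne (not_lt.1 h) h0; linarith
    have hs : 0 < Real.sqrt (-c) := Real.sqrt_pos.2 hc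
    exact div_pos (Real.sinh_pos_iff.2 (by positivity)) hs

lemma sK_nonneg (c x : ℝ) (hc : c < Real.pi ^ 2) (hx : 0 ≤ x) (hx1 : x ≤ 1) : 0 ≤ sK c x := by
  rcases hx.eq_or_lt with h | h
  · rw [← h, sK_zero]
  · exact (sK_pos c x hc h hx1).le

lemma sK_scale (k θ x : ℝ) (hθ : 0 < θ) : sK k (x * θ) = θ * sK (k * θ ^ 2) x := by
  have h2 : 0 < θ ^ 2 := by positivity
  unfold sK
  by_cases h : 0 < k
  · have : 0 < k * θ ^ 2 := by positivity
    have hs : 0 < Real.sqrt k := Real.sqrt_pos.2 h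
    simp only [h, this, if_true]
    rw [Real.sqrt_mul h.le, Real.sqrt_sq hθ.le]
    rw [show Real.sqrt k * (x * θ) = Real.sqrt k * θ * x by ring]
    field_simp
  · by_cases h0 : k = 0
    · simp [h0]; ring
    · have hc : 0 < -k := by have := lt_of_le_of_ne (not_lt.1 h) h0; linarith
      have hs : 0 < Real.sqrt (-k) := Real.sqrt_pos.2 hc
      have h3 : ¬ 0 < k * θ ^ 2 := by nlinarith
      have h4 : ¬ k * θ ^ 2 = 0 := by nlinarith
      simp only [h, h0, h3, h4, if_false]
      rw [show -(k * θ^2) = (-k) * θ^2 by ring, Real.sqrt_mul hc.le, Real.sqrt_sq hθ.le]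
      rw [show Real.sqrt (-k) * (x * θ) = Real.sqrt (-k) * θ * x by ring]
      field_simp

lemma sigmaR_eq (k θ t L : ℝ) (hθ : 0 ≤ θ) (hL : 0 < L) :
    sigmaR k t (L * θ) = sK (k * θ ^ 2) (t * L) / sK (k * θ ^ 2) L := by
  unfold sigmaR
  split_ifs with h
  · have : k * θ ^ 2 = 0 := by
      have : k * θ^2 * L^2 = 0 := by linear_combination h
      rcases mul_eq_zero.1 this with h | h
      · exact h
      · exact absurd h (by positivity)
    rw [this]; simp [sK]; field_simp
  · have hθ' : 0 < θ := by
      rcases hθ.eq_or_lt with h' | h'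
      · exact absurd (by rw [← h']; ring) h
      · exact h'
    rw [← mul_assoc, sK_scale _ _ _ hθ', sK_scale _ _ _ hθ', mul_div_mul_left _ _ hθ'.ne']

/-- Classical comparison. -/
lemma comparison (c : ℝ) (hc : c < Real.pi ^ 2) (w w' w'' : ℝ → ℝ)
    (h1 : ∀ x, HasDerivAt w (w' x) x) (h2 : ∀ x, HasDerivAt w' (w'' x) x)
    (a b x : ℝ) (hax : a ≤ x) (hxb : x ≤ b) (hab : b - a ≤ 1)
    (h : ∀ y ∈ Set.Icc a b, w'' y ≤ -c * w y) :
    sK c (b - x) * w a + sK c (x - a) * w b ≤ sK c (b - a) * w x := by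
  have d1 : ∀ y, HasDerivAt (fun y => w' y * sK c (y - a) - w y * cK c (y - a))
      ((w'' y + c * w y) * sK c (y - a)) y := by
    intro y
    have e := (hasDerivAt_id' y).sub_const a
    have es : HasDerivAt (fun y => sK c (y - a)) (cK c (y - a) * 1) y :=
      HasDerivAt.comp (h₂ := sK c) y (sK_hasDeriv c (y - a)) e
    have ec : HasDerivAt (fun y => cK c (y - a)) (-c * sK c (y - a) * 1) y :=
      HasDerivAt.comp (h₂ := cK c) y (cK_hasDeriv c (y - a)) e
    refine HasDerivAt.congr_deriv (((h2 y).mul es).sub ((h1 y).mul ec)) ?_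
    ring
  have d2 : ∀ y, HasDerivAt (fun y => w' y * sK c (b - y) + w y * cK c (b - y))
      ((w'' y + c * w y) * sK c (b - y)) y := by
    intro y
    have e := (hasDerivAt_id' y).const_sub b
    have es : HasDerivAt (fun y => sK c (b - y)) (cK c (b - y) * -1) y :=
      (sK_hasDeriv c (b - y)).comp y e
    have ec : HasDerivAt (fun y => cK c (b - y)) (-c * sK c (b - y) * -1) y :=
      (cK_hasDeriv c (b - y)).comp y e
    refine HasDerivAt.congr_deriv (((h2 y).mul es).add ((h1 y).mul ec)) ?_
    ring
  have m1 := antitoneOn_of_deriv_nonpos (convex_Icc a x)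
    (fun y _ => (d1 y).continuousAt.continuousWithinAt)
    (fun y _ => (d1 y).differentiableAt.differentiableWithinAt) (by
      intro y hy
      rw [interior_Icc] at hy
      rw [(d1 y).deriv]
      have := h y ⟨hy.1.le, hy.2.le.trans hxb⟩
      exact mul_nonpos_of_nonpos_of_nonneg (by linarith)
        (sK_nonneg c _ hc (by linarith [hy.1]) (by linarith [hy.2])))
    (Set.left_mem_Icc.2 hax) (Set.right_mem_Icc.2 hax) hax
  have m2 := antitoneOn_of_deriv_nonpos (convex_Icc x b)
    (fun y _ => (d2 y).continuousAt.continuousWithinAt)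
    (fun y _ => (d2 y).differentiableAt.differentiableWithinAt) (by
      intro y hy
      rw [interior_Icc] at hy
      rw [(d2 y).deriv]
      have := h y ⟨hax.trans hy.1.le, hy.2.le⟩
      exact mul_nonpos_of_nonpos_of_nonneg (by linarith)
        (sK_nonneg c _ hc (by linarith [hy.2]) (by linarith [hy.1])))
    (Set.left_mem_Icc.2 hxb) (Set.right_mem_Icc.2 hxb) hxb
  simp only [sub_self, sK_zero, cK_zero, mul_zero, mul_one, zero_sub, zero_add] at m1 m2
  have p1 := sK_nonneg c (b - x) hc (by linarith) (by linarith)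
  have p2 := sK_nonneg c (x - a) hc (by linarith) (by linarith)
  have ad := sK_add c (b - x) (x - a)
  rw [show b - x + (x - a) = b - a by ring] at ad
  rw [ad]
  nlinarith [mul_le_mul_of_nonneg_left m1 p1, mul_le_mul_of_nonneg_left m2 p2]

/-- Second difference upper bound. -/
lemma second_diff_le (ψ ψ' ψ'' : ℝ → ℝ) (h1 : ∀ x, HasDerivAt ψ (ψ' x) x)
    (h2 : ∀ x, HasDerivAt ψ' (ψ'' x) x) (x h M : ℝ) (hh : 0 ≤ h)
    (hM : ∀ y ∈ Set.Icc (x - h) (x + h), ψ'' y ≤ M) :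
    ψ (x + h) + ψ (x - h) - 2 * ψ x ≤ M * h ^ 2 := by
  have e1 : ∀ y, HasDerivAt (fun y => ψ y - M / 2 * y ^ 2) (ψ' y - M * y) y := by
    intro y
    refine HasDerivAt.congr_deriv ((h1 y).sub ((hasDerivAt_pow 2 y).const_mul (M / 2))) ?_
    push_cast; ring
  have e2 : ∀ y, HasDerivAt (fun y => ψ' y - M * y) (ψ'' y - M) y := by
    intro y
    refine HasDerivAt.congr_deriv ((h2 y).sub ((hasDerivAt_id' y).const_mul M)) ?_
    ring
  have hd : deriv (fun y => ψ y - M / 2 * y ^ 2) = fun y => ψ' y - M * y :=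
    funext fun y => (e1 y).deriv
  have hcv : ConcaveOn ℝ (Set.Icc (x - h) (x + h)) (fun y => ψ y - M / 2 * y ^ 2) := by
    apply concaveOn_of_deriv2_nonpos (convex_Icc _ _)
    · exact fun y _ => (e1 y).continuousAt.continuousWithinAt
    · exact fun y _ => (e1 y).differentiableAt.differentiableWithinAt
    · rw [hd]; exact fun y _ => (e2 y).differentiableAt.differentiableWithinAt
    · intro y hy
      rw [interior_Icc] at hy
      simp only [Function.iterate_succ, Function.iterate_zero, Function.comp, id]
      rw [hd, (e2 y).deriv]
      linarith [hM y ⟨hy.1.le, hy.2.le⟩]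
  have := hcv.2 (show x - h ∈ Set.Icc (x - h) (x + h) from ⟨le_rfl, by linarith⟩)
    (show x + h ∈ Set.Icc (x - h) (x + h) from ⟨by linarith, le_rfl⟩)
    (show (0:ℝ) ≤ 1 / 2 by norm_num) (show (0:ℝ) ≤ 1 / 2 by norm_num) (by norm_num)
  simp only [smul_eq_mul] at this
  rw [show 1 / 2 * (x - h) + 1 / 2 * (x + h) = x by ring] at this
  nlinarith

lemma le_second_diff (ψ ψ' ψ'' : ℝ → ℝ) (h1 : ∀ x, HasDerivAt ψ (ψ' x) x)
    (h2 : ∀ x, HasDerivAt ψ' (ψ'' x) x) (x h M : ℝ) (hh : 0 ≤ h)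
    (hM : ∀ y ∈ Set.Icc (x - h) (x + h), M ≤ ψ'' y) :
    M * h ^ 2 ≤ ψ (x + h) + ψ (x - h) - 2 * ψ x := by
  have := second_diff_le (fun y => -ψ y) (fun y => -ψ' y) (fun y => -ψ'' y)
    (fun y => (h1 y).neg) (fun y => (h2 y).neg) x h (-M) hh (fun y hy => neg_le_neg (hM y hy))
  linarith

lemma second_diff_tendsto (ψ ψ' ψ'' : ℝ → ℝ) (h1 : ∀ x, HasDerivAt ψ (ψ' x) x)
    (h2 : ∀ x, HasDerivAt ψ' (ψ'' x) x) (hc : Continuous ψ'') (x : ℝ) :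
    Tendsto (fun h => (ψ (x + h) + ψ (x - h) - 2 * ψ x) / h ^ 2) (𝓝[>] 0) (𝓝 (ψ'' x)) := by
  rw [Metric.tendsto_nhds]
  intro ε hε
  obtain ⟨δ, hδ, H⟩ := Metric.continuous_iff.1 hc x (ε / 2) (by positivity)
  filter_upwards [Ioo_mem_nhdsGT hδ] with h hh
  have hb : ∀ y ∈ Set.Icc (x - h) (x + h), |ψ'' y - ψ'' x| < ε / 2 := by
    intro y hy
    apply H
    rw [Real.dist_eq, abs_lt]
    constructor <;> linarith [hy.1, hy.2, hh.2]
  have hp : 0 < h ^ 2 := by have := hh.1; positivity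
  have u1 := second_diff_le ψ ψ' ψ'' h1 h2 x h (ψ'' x + ε / 2) hh.1.le
    (fun y hy => by linarith [(abs_lt.1 (hb y hy)).2])
  have u2 := le_second_diff ψ ψ' ψ'' h1 h2 x h (ψ'' x - ε / 2) hh.1.le
    (fun y hy => by linarith [(abs_lt.1 (hb y hy)).1])
  rw [← div_le_iff₀ hp] at u1
  rw [← le_div_iff₀ hp] at u2
  rw [Real.dist_eq, abs_lt]
  constructor <;> linarith

lemma eq_zero_of_tsupp {φ : ℝ → ℝ} {s : Set ℝ} (h : tsupport φ ⊆ s) {x : ℝ} (hx : x ∉ s) :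
    φ x = 0 := image_eq_zero_of_notMem_tsupport fun h' => hx (h h')

lemma tsupport_deriv2 {φ : ℝ → ℝ} : tsupport (deriv (deriv φ)) ⊆ tsupport φ :=
  (closure_minimal (support_deriv_subset (f := deriv φ)) (isClosed_tsupport _)).trans
    (closure_minimal (support_deriv_subset (f := φ)) (isClosed_tsupport _))

lemma c2_derivs {φ : ℝ → ℝ} (hφ : ContDiff ℝ 2 φ) :
    (∀ x, HasDerivAt φ (deriv φ x) x) ∧ (∀ x, HasDerivAt (deriv φ) (deriv (deriv φ) x) x) ∧
      ContDiff ℝ 1 (deriv φ) ∧ Continuous (deriv (deriv φ)) := by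
  have h1 : ContDiff ℝ 1 (deriv φ) :=
    ((contDiff_succ_iff_deriv (n := 1)).1 (by simpa [one_add_one_eq_two] using hφ)).2.2
  exact ⟨fun x => (hφ.differentiable (by norm_num) x).hasDerivAt,
    fun x => (h1.differentiable (by norm_num) x).hasDerivAt, h1, h1.continuous_deriv le_rfl⟩

lemma interval_eq (g : ℝ → ℝ) (hg : ∀ x, x ∉ Set.Ioo (0:ℝ) 1 → g x = 0) :
    ∫ x in (0:ℝ)..1, g x = ∫ x, g x := by
  rw [intervalIntegral.integral_of_le zero_le_one]
  apply setIntegral_eq_integral_of_forall_compl_eq_zero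
  intro x hx
  exact hg x fun h => hx ⟨h.1, h.2.le⟩

lemma fwd (U : ℝ → ℝ) (hU : Continuous U) (c : ℝ) (hc : c < Real.pi ^ 2)
    (H : ∀ φ : ℝ → ℝ, ContDiff ℝ 2 φ → HasCompactSupport φ → tsupport φ ⊆ Set.Ioo 0 1 →
        (∀ x, 0 ≤ φ x) → ∫ x, U x * deriv (deriv φ) x ≤ ∫ x, -c * U x * φ x)
    (a b x : ℝ) (ha : 0 < a) (hb : b < 1) (hax : a ≤ x) (hxb : x ≤ b) :
    sK c (b - x) * U a + sK c (x - a) * U b ≤ sK c (b - a) * U x := by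
  let B : ℕ → ContDiffBump (0 : ℝ) := fun n =>
    ⟨1 / (2 * ((n : ℝ) + 1)), 1 / ((n : ℝ) + 1), by positivity, by
      apply one_div_lt_one_div_of_lt <;> [positivity; skip]
      have : (0:ℝ) ≤ n := n.cast_nonneg
      linarith⟩
  have hB : Tendsto (fun n => (B n).rOut) atTop (𝓝 0) := tendsto_one_div_add_atTop_nhds_zero_nat
  have hlim := fun y => ContDiffBump.convolution_tendsto_right_of_continuous (μ := volume) hB hU y
  refine le_of_tendsto_of_tendsto (((hlim a).const_mul _).add ((hlim b).const_mul _))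
    ((hlim x).const_mul _) ?_
  have hev : ∀ᶠ n in atTop, (B n).rOut < min a (1 - b) :=
    hB.eventually_lt_const (lt_min ha (by linarith))
  filter_upwards [hev] with n hn
  have hn1 := hn.trans_le (min_le_left _ _)
  have hn2 := hn.trans_le (min_le_right _ _)
  set ρ := (B n).normed volume with hρ
  have hρ2 : ContDiff ℝ 2 ρ := (B n).contDiff_normed (n := 2)
  have hρc : HasCompactSupport ρ := (B n).hasCompactSupport_normed
  obtain ⟨r1, r2, r3, r4⟩ := c2_derivs hρ2
  have hUl : LocallyIntegrable U volume := hU.locallyIntegrable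
  refine comparison c hc _ _ _
    (fun y => hρc.hasDerivAt_convolution_left _ (hρ2.of_le (by norm_num)) hUl y)
    (fun y => hρc.deriv.hasDerivAt_convolution_left _ r3 hUl y) a b x hax hxb (by linarith) ?_
  intro y hy
  rw [convolution_eq_swap, convolution_eq_swap]
  simp only [ContinuousLinearMap.lsmul_apply, smul_eq_mul]
  have hd : ∀ z, HasDerivAt (fun z => ρ (y - z)) (-deriv ρ (y - z)) z := fun z =>
    (HasDerivAt.comp (h₂ := ρ) z (r1 (y - z)) ((hasDerivAt_id' z).const_sub y)).congr_deriv
      (by ring)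
  have hd2 : ∀ z, HasDerivAt (fun z => -deriv ρ (y - z)) (deriv (deriv ρ) (y - z)) z := fun z =>
    ((HasDerivAt.comp (h₂ := deriv ρ) z (r2 (y - z))
      ((hasDerivAt_id' z).const_sub y)).neg).congr_deriv (by ring)
  have e1 : deriv (fun z => ρ (y - z)) = fun z => -deriv ρ (y - z) := funext fun z => (hd z).deriv
  have e2 : deriv (fun z => -deriv ρ (y - z)) = fun z => deriv (deriv ρ) (y - z) :=
    funext fun z => (hd2 z).deriv
  have hts : tsupport (fun z => ρ (y - z)) ⊆ Metric.closedBall y (B n).rOut := by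
    apply closure_minimal _ Metric.isClosed_closedBall
    intro z hz
    have hz' : y - z ∈ Function.support ρ := hz
    rw [hρ, (B n).support_normed_eq, mem_ball_zero_iff, Real.norm_eq_abs] at hz'
    rw [Metric.mem_closedBall, dist_comm, Real.dist_eq]
    exact hz'.le
  have key := H (fun z => ρ (y - z)) (hρ2.comp (contDiff_const.sub contDiff_id))
    (HasCompactSupport.of_support_subset_isCompact (isCompact_closedBall y (B n).rOut)
      ((subset_tsupport _).trans hts))
    (by
      refine hts.trans ?_
      intro z hz
      rw [Metric.mem_closedBall, Real.dist_eq, abs_le] at hz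
      constructor <;> linarith [hz.1, hz.2, hy.1, hy.2])
    (fun z => (B n).nonneg_normed _)
  rw [e1, e2] at key
  rw [← integral_const_mul]
  calc _ = ∫ z, U z * deriv (deriv ρ) (y - z) := by
        congr 1; ext z; ring
    _ ≤ _ := key
    _ = _ := by congr 1; ext z; ring

lemma bwd (U : ℝ → ℝ) (hU : Continuous U) (c : ℝ)
    (H : ∀ x h : ℝ, 0 < h → 0 ≤ x - h → x + h ≤ 1 → U (x + h) + U (x - h) ≤ 2 * cK c h * U x)
    (φ : ℝ → ℝ) (hφ : ContDiff ℝ 2 φ) (hφc : HasCompactSupport φ)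
    (hts : tsupport φ ⊆ Set.Ioo 0 1) (hnn : ∀ x, 0 ≤ φ x) :
    ∫ x, U x * deriv (deriv φ) x ≤ ∫ x, -c * U x * φ x := by
  obtain ⟨r1, r2, r3, r4⟩ := c2_derivs hφ
  obtain ⟨δ, hδ, hth⟩ := hφc.isCompact.exists_cthickening_subset_open isOpen_Ioo hts
  have hnear : ∀ x y : ℝ, |y - x| ≤ δ → φ x ≠ 0 → y ∈ Set.Ioo (0:ℝ) 1 := fun x y hxy hx =>
    hth (Metric.mem_cthickening_of_dist_le y x δ _ (subset_tsupport _ hx)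
      (by rwa [Real.dist_eq]))
  obtain ⟨M, hM⟩ := r4.bounded_above_of_compact_support hφc.deriv.deriv
  have hM' : ∀ x, |deriv (deriv φ) x| ≤ M := hM
  have hcK : Continuous fun x => -c * cK c x :=
    continuous_const.mul (continuous_iff_continuousAt.2 fun x => (cK_hasDeriv c x).continuousAt)
  have L1 : Tendsto (fun h => ∫ x, U x * ((φ (x + h) + φ (x - h) - 2 * φ x) / h ^ 2)) (𝓝[>] 0)
      (𝓝 (∫ x, U x * deriv (deriv φ) x)) := by
    apply tendsto_integral_filter_of_dominated_convergence
      (fun x => (Set.Icc (0:ℝ) 1).indicator (fun x => |U x| * M) x)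
    · refine Eventually.of_forall fun h => Continuous.aestronglyMeasurable ?_
      have := hφ.continuous
      fun_prop
    · filter_upwards [Ioo_mem_nhdsGT hδ] with h hh
      refine Eventually.of_forall fun x => ?_
      have hp : 0 < h ^ 2 := by have := hh.1; positivity
      by_cases hx : x ∈ Set.Icc (0:ℝ) 1
      · rw [Set.indicator_of_mem hx, norm_mul, Real.norm_eq_abs, Real.norm_eq_abs]
        apply mul_le_mul_of_nonneg_left _ (abs_nonneg _)
        have u1 := second_diff_le φ _ _ r1 r2 x h M hh.1.le (fun y _ => (abs_le.1 (hM' y)).2)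
        have u2 := le_second_diff φ _ _ r1 r2 x h (-M) hh.1.le (fun y _ => (abs_le.1 (hM' y)).1)
        rw [abs_le, div_le_iff₀ hp, le_div_iff₀ hp]
        exact ⟨u2, u1⟩
      · rw [Set.indicator_of_notMem hx]
        have z : ∀ y, |x - y| ≤ δ → φ y = 0 := by
          intro y hy
          by_contra h0
          exact hx (Set.Ioo_subset_Icc_self (hnear y x hy h0))
        have ha : |h| ≤ δ := by rw [abs_of_pos hh.1]; exact hh.2.le
        rw [z (x + h) (by simpa using ha), z (x - h) (by simpa using ha), z x (by simpa using hδ.le)]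
        simp
    · rw [integrable_indicator_iff measurableSet_Icc]
      exact (hU.abs.mul continuous_const).integrableOn_Icc
    · exact Eventually.of_forall fun x => (second_diff_tendsto φ _ _ r1 r2 r4 x).const_mul _
  have L2 : Tendsto (fun h => (cK c (0 + h) + cK c (0 - h) - 2 * cK c 0) / h ^ 2 * ∫ x, U x * φ x)
      (𝓝[>] 0) (𝓝 (-c * cK c 0 * ∫ x, U x * φ x)) := by
    refine Tendsto.mul_const _ ?_
    exact second_diff_tendsto (cK c) (fun x => -c * sK c x) (fun x => -c * cK c x)
      (cK_hasDeriv c) (fun x => (sK_hasDeriv c x).const_mul _) hcK 0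
  have hR : ∫ x, -c * U x * φ x = -c * cK c 0 * ∫ x, U x * φ x := by
    rw [cK_zero, mul_one, ← integral_const_mul]
    congr 1; ext x; ring
  rw [hR]
  refine le_of_tendsto_of_tendsto L1 L2 ?_
  filter_upwards [Ioo_mem_nhdsGT hδ] with h hh
  have hp : 0 < h ^ 2 := by have := hh.1; positivity
  have hφk := hφ.continuous
  have I0 : ∀ V : ℝ → ℝ, Continuous V → Integrable (fun x => V x * φ x) volume := fun V hV =>
    (hV.mul hφk).integrable_of_hasCompactSupport hφc.mul_left
  have Ip := I0 (fun x => U (x + h)) (by fun_prop)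
  have Im := I0 (fun x => U (x - h)) (by fun_prop)
  have S1 : ∫ x, U x * φ (x + h) = ∫ x, U (x - h) * φ x := by
    rw [← integral_add_right_eq_self (fun x => U (x - h) * φ x) h]
    simp
  have S2 : ∫ x, U x * φ (x - h) = ∫ x, U (x + h) * φ x := by
    rw [← integral_sub_right_eq_self (fun x => U (x + h) * φ x) h]
    simp
  have J1 : Integrable (fun x => U x * φ (x + h)) volume := by
    simpa using Im.comp_add_right h
  have J2 : Integrable (fun x => U x * φ (x - h)) volume := by
    simpa using Ip.comp_sub_right h
  have J0 := I0 U hU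
  have E : ∫ x, U x * ((φ (x + h) + φ (x - h) - 2 * φ x) / h ^ 2)
      = (∫ x, (U (x + h) + U (x - h) - 2 * U x) * φ x) / h ^ 2 := by
    calc _ = ∫ x, (U x * φ (x + h) + U x * φ (x - h) - 2 * (U x * φ x)) / h ^ 2 := by
          congr 1; ext x; ring
      _ = (∫ x, U x * φ (x + h) + U x * φ (x - h) - 2 * (U x * φ x)) / h ^ 2 :=
          integral_div _ _
      _ = (∫ x, U (x + h) * φ x + U (x - h) * φ x - 2 * (U x * φ x)) / h ^ 2 := by
          have e1 := integral_sub (J1.add J2) (J0.const_mul 2)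
          have e2 := integral_sub (Ip.add Im) (J0.const_mul 2)
          simp only [Pi.add_apply] at e1 e2
          rw [e1, e2, integral_add J1 J2, integral_add Ip Im, S1, S2]
          ring
      _ = _ := by congr 2; ext x; ring
  rw [E, div_mul_eq_mul_div]
  apply div_le_div_of_nonneg_right _ hp.le
  rw [← integral_const_mul]
  apply integral_mono (I0 (fun x => U (x + h) + U (x - h) - 2 * U x) (by fun_prop))
    (J0.const_mul _)
  intro x
  show (U (x + h) + U (x - h) - 2 * U x) * φ x ≤
    (cK c (0 + h) + cK c (0 - h) - 2 * cK c 0) * (U x * φ x)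
  rw [zero_add, zero_sub, cK_neg, cK_zero]
  by_cases hx : φ x = 0
  · simp [hx]
  · have ha : |h| ≤ δ := by rw [abs_of_pos hh.1]; exact hh.2.le
    have q1 := hnear x (x + h) (by simpa using ha) hx
    have q2 := hnear x (x - h) (by simpa using ha) hx
    have := H x h hh.1 q2.1.le q1.2.le
    nlinarith [hnn x]

/-- A nonnegative semi-convex `u` on `[0,1]` satisfies the distributional inequality
`u'' ≤ −(K/N)θ²u` if and only if it satisfies the integrated `σ`-concavity inequality on every
subinterval of `[0,1]` (with coefficient scaled by the length of the subinterval). -/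
theorem stmt_14 (u : ℝ → ℝ) (K N θ : ℝ) (hN : 0 < N) (hθ : 0 ≤ θ)
    (hdom : 0 < K → K / N * θ ^ 2 < Real.pi ^ 2)
    (hcont : ContinuousOn u (Set.Icc 0 1))
    (hnn : ∀ t ∈ Set.Icc (0 : ℝ) 1, 0 ≤ u t)
    (hsc : ∃ C : ℝ, ConvexOn ℝ (Set.Icc 0 1) fun x => u x + C * x ^ 2) :
    ((∀ φ : ℝ → ℝ, ContDiff ℝ 2 φ → HasCompactSupport φ → tsupport φ ⊆ Set.Ioo 0 1 →
        (∀ x, 0 ≤ φ x) →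
        ∫ x in (0 : ℝ)..1, u x * deriv (deriv φ) x ≤
          ∫ x in (0 : ℝ)..1, -(K / N) * θ ^ 2 * u x * φ x)
      ↔
      (∀ a b : ℝ, 0 ≤ a → a < b → b ≤ 1 → ∀ t ∈ Set.Icc (0 : ℝ) 1,
        sigmaR (K / N) (1 - t) ((b - a) * θ) * u a + sigmaR (K / N) t ((b - a) * θ) * u b
          ≤ u ((1 - t) * a + t * b))) := by
  set c := K / N * θ ^ 2 with hcdef
  have hc : c < Real.pi ^ 2 := by
    by_cases hK : 0 < K
    · exact hdom hK
    · have : K / N ≤ 0 := div_nonpos_of_nonpos_of_nonneg (not_lt.1 hK) hN.le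
      have h1 : c ≤ 0 := mul_nonpos_of_nonpos_of_nonneg this (sq_nonneg _)
      have := Real.pi_pos
      have : 0 < Real.pi ^ 2 := by positivity
      linarith
  let U : ℝ → ℝ := Set.IccExtend (zero_le_one (α := ℝ)) ((Set.Icc (0:ℝ) 1).domRestrict u)
  have hU : Continuous U := (continuousOn_iff_continuous_domRestrict.1 hcont).Icc_extend'
  have hUu : ∀ x ∈ Set.Icc (0:ℝ) 1, U x = u x := fun x hx => by
    simp only [U]
    rw [Set.IccExtend_of_mem _ _ hx]; rfl
  have conv1 : ∀ φ : ℝ → ℝ, tsupport φ ⊆ Set.Ioo 0 1 →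
      ∫ x in (0 : ℝ)..1, u x * deriv (deriv φ) x = ∫ x, U x * deriv (deriv φ) x := by
    intro φ h
    have h' := tsupport_deriv2.trans h
    rw [interval_eq _ fun x hx => by rw [eq_zero_of_tsupp h' hx, mul_zero]]
    congr 1; ext x
    by_cases hx : x ∈ Set.Ioo (0:ℝ) 1
    · rw [hUu x (Set.Ioo_subset_Icc_self hx)]
    · rw [eq_zero_of_tsupp h' hx]; simp
  have conv2 : ∀ φ : ℝ → ℝ, tsupport φ ⊆ Set.Ioo 0 1 →
      ∫ x in (0 : ℝ)..1, -(K / N) * θ ^ 2 * u x * φ x = ∫ x, -c * U x * φ x := by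
    intro φ h
    rw [interval_eq _ fun x hx => by rw [eq_zero_of_tsupp h hx, mul_zero]]
    congr 1; ext x
    by_cases hx : x ∈ Set.Ioo (0:ℝ) 1
    · rw [hUu x (Set.Ioo_subset_Icc_self hx), hcdef]; ring
    · rw [eq_zero_of_tsupp h hx]; simp
  have sigma_form : ∀ a b : ℝ, 0 ≤ a → a < b → b ≤ 1 → ∀ t ∈ Set.Icc (0 : ℝ) 1,
      ((sigmaR (K / N) (1 - t) ((b - a) * θ) * u a + sigmaR (K / N) t ((b - a) * θ) * u b
          ≤ u ((1 - t) * a + t * b)) ↔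
        sK c ((1 - t) * (b - a)) * U a + sK c (t * (b - a)) * U b
          ≤ sK c (b - a) * U ((1 - t) * a + t * b)) := by
    intro a b ha hab hb t ht
    have hp : 0 < sK c (b - a) := sK_pos c _ hc (by linarith) (by linarith)
    rw [sigmaR_eq _ _ _ _ hθ (by linarith), sigmaR_eq _ _ _ _ hθ (by linarith), ← hcdef,
      hUu a ⟨ha, by linarith⟩, hUu b ⟨by linarith, hb⟩,
      hUu _ ⟨by nlinarith [ht.1, ht.2], by nlinarith [ht.1, ht.2]⟩, div_mul_eq_mul_div,
      div_mul_eq_mul_div, ← add_div, div_le_iff₀ hp, mul_comm (u _) (sK c (b - a))]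
  constructor
  · intro H a b ha hab hb t ht
    rw [sigma_form a b ha hab hb t ht]
    have hf := fwd U hU c hc (fun φ h1 h2 h3 h4 => by
      rw [← conv1 φ h3, ← conv2 φ h3]; exact H φ h1 h2 h3 h4)
    have hsc : Continuous (sK c) :=
      continuous_iff_continuousAt.2 fun x => (sK_hasDeriv c x).continuousAt
    set x := (1 - t) * a + t * b with hx
    have hax : a ≤ x := by nlinarith [ht.1, ht.2]
    have hxb : x ≤ b := by nlinarith [ht.1, ht.2]
    rw [show (1 - t) * (b - a) = b - x by rw [hx]; ring,
      show t * (b - a) = x - a by rw [hx]; ring]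
    let A : ℝ → ℝ → ℝ := fun ε y => (1 - ε) * y + ε / 2
    have c1 : Continuous fun ε => sK c (A ε b - A ε x) * U (A ε a)
        + sK c (A ε x - A ε a) * U (A ε b) := by fun_prop
    have c2 : Continuous fun ε => sK c (A ε b - A ε a) * U (A ε x) := by fun_prop
    have A0 : ∀ y, A 0 y = y := fun y => by simp [A]
    have t1 := (c1.tendsto 0).mono_left (nhdsWithin_le_nhds (s := Set.Ioi 0))
    have t2 := (c2.tendsto 0).mono_left (nhdsWithin_le_nhds (s := Set.Ioi 0))
    simp only [A0] at t1 t2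
    refine le_of_tendsto_of_tendsto t1 t2 ?_
    filter_upwards [Ioo_mem_nhdsGT (zero_lt_one (α := ℝ))] with ε hε
    have h0 := hε.1
    have h1 := hε.2
    apply hf
    · simp only [A]; nlinarith
    · simp only [A]; nlinarith
    · simp only [A]; nlinarith
    · simp only [A]; nlinarith
  · intro H φ h1 h2 h3 h4
    rw [conv1 φ h3, conv2 φ h3]
    apply bwd U hU c _ φ h1 h2 h3 h4
    intro x h hh hx0 hx1
    have := (sigma_form (x - h) (x + h) hx0 (by linarith) hx1 (1 / 2) (by norm_num)).1
      (H (x - h) (x + h) hx0 (by linarith) hx1 (1 / 2) (by norm_num))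
    rw [show (1 - 1 / 2) * (x + h - (x - h)) = h by ring,
      show 1 / 2 * (x + h - (x - h)) = h by ring, show x + h - (x - h) = h + h by ring,
      show (1 - 1 / 2) * (x - h) + 1 / 2 * (x + h) = x by ring, sK_add] at this
    have hp : 0 < sK c h := sK_pos c h hc hh (by linarith)
    refine le_of_mul_le_mul_left ?_ hp
    linarith
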